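/- (Marck's theorem.) Let M > a ≥ 0, E, Φ, κ ∈ ℝ, and let x(τ) = (t(τ), r(τ), ϑ(τ), φ(τ)) be a C² curve in the Boyer–Lindquist chart of the Kerr metric on an interval I, along which sin ϑ > 0, Δ > 0, R > 0, Θ > 0, κ > a²cos²ϑ, and whose velocity satisfies ṫ = [((r²+a²)² − a²Δ sin²ϑ)E − 2MarΦ]/(ΣΔ), φ̇ = [2MarE + ((Δ − a²sin²ϑ)/sin²ϑ)Φ]/(ΣΔ), ṙ = √R/Σ, ϑ̇ = √Θ/Σ, and which satisfies the geodesic equation ẍ^i + ∑_{j,k} Γ^i_{jk}(x)ẋ^jẋ^k = 0. Let e₀, e₁, e₂, e₃ be the orthonormal symmetric frame with Boyer–Lindquist components e₀ = ((r²+a²)/√(ΣΔ), 0, 0, a/√(ΣΔ)), e₁ = (0, √(Δ/Σ), 0, 0), e₂ = (−a sinϑ/√Σ, 0, 0, −1/(√Σ sinϑ)), e₃ = (0, 0, 1/√Σ, 0), and define the coordinate vector fields along x: L₀ := ẋ; L₃ := (κΣ)^{−1/2}[(a cosϑ√R/√Δ)e₀ + (a cosϑ·𝒫/√Δ)e₁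 + (r√Θ)e₂ − (r𝒟)e₃]; L̃₁ := (κΣ)^{−1/2}[(√ϖ·r√R/√Δ)e₀ + (√ϖ·r𝒫/√Δ)e₁ − ((a cosϑ/√ϖ)√Θ)e₂ + ((a cosϑ/√ϖ)𝒟)e₃]; L̃₂ := Σ^{−1/2}[(√ϖ·𝒫/√Δ)e₀ + (√ϖ·√R/√Δ)e₁ + (𝒟/√ϖ)e₂ + (√Θ/√ϖ)e₃]; and L₁ := cos Φ̂(τ)·L̃₁ − sin Φ̂(τ)·L̃₂, L₂ := sin Φ̂(τ)·L̃₁ + cos Φ̂(τ)·L̃₂, where Φ̂ : I → ℝ is any solution of dΦ̂/dτ = (√κ/Σ)[𝒫/(r²+κ) − a sinϑ·𝒟/(κ − a²cos²ϑ)]. Then each of L₀, L₁, L₂, L₃ is parallel propagated along x: dL^i/dτ + ∑_{j,k} Γ^i_{jk}(x)ẋ^j L^k = 0 for all i. -/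

import Mathlib

noncomputable section

/-- Σ := r² + a²cos²ϑ. -/
def Sigk (a r ϑ : ℝ) : ℝ := r ^ 2 + a ^ 2 * Real.cos ϑ ^ 2

/-- Δ := r² − 2Mr + a². -/
def Delk (M a r : ℝ) : ℝ := r ^ 2 - 2 * M * r + a ^ 2

/-- 𝒫 := E(r²+a²) − aΦ. -/
def Pk (a E Φ r : ℝ) : ℝ := E * (r ^ 2 + a ^ 2) - a * Φ

/-- 𝒟 := aE sinϑ − Φ/sinϑ. -/
def Dk (a E Φ ϑ : ℝ) : ℝ := a * E * Real.sin ϑ - Φ / Real.sin ϑ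

/-- R := 𝒫² − Δ(κ+r²). -/
def Rk (M a E Φ κ r : ℝ) : ℝ := Pk a E Φ r ^ 2 - Delk M a r * (κ + r ^ 2)

/-- Θ := κ − a²cos²ϑ − 𝒟². -/
def Thk (a E Φ κ ϑ : ℝ) : ℝ := κ - a ^ 2 * Real.cos ϑ ^ 2 - Dk a E Φ ϑ ^ 2

/-- ϖ := (κ − a²cos²ϑ)/(r²+κ). -/
def piomk (a κ r ϑ : ℝ) : ℝ := (κ - a ^ 2 * Real.cos ϑ ^ 2) / (r ^ 2 + κ)

/-- ϱ := 𝒫² − Δ(κ − a²cos²ϑ). -/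
def vrhok (M a E Φ κ r ϑ : ℝ) : ℝ :=
  Pk a E Φ r ^ 2 - Delk M a r * (κ - a ^ 2 * Real.cos ϑ ^ 2)

/-- ρ := 𝒫² − ΔΘ. -/
def rhok (M a E Φ κ r ϑ : ℝ) : ℝ := Pk a E Φ r ^ 2 - Delk M a r * Thk a E Φ κ ϑ

/-- Minkowski inner product of frame-component 4-tuples:
⟨u,v⟩_η := u⁰v⁰ − u¹v¹ − u²v² − u³v³. -/
def minkInner (u v : Fin 4 → ℝ) : ℝ :=
  u 0 * v 0 - u 1 * v 1 - u 2 * v 2 - u 3 * v 3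

/-- Partial derivative in the i-th coordinate direction of ℝ⁴. -/
def pd (i : Fin 4) (f : (Fin 4 → ℝ) → ℝ) (x : Fin 4 → ℝ) : ℝ :=
  fderiv ℝ f x (Pi.single i 1)

open Real in
/-- The Kerr metric in Boyer–Lindquist coordinates (t,r,ϑ,φ); here r = x 1, ϑ = x 2. -/
def kerrMetric (M a : ℝ) (x : Fin 4 → ℝ) : Matrix (Fin 4) (Fin 4) ℝ :=
  !![(Delk M a (x 1) - a ^ 2 * sin (x 2) ^ 2) / Sigk a (x 1) (x 2), 0, 0,
      2 * M * a * x 1 * sin (x 2) ^ 2 / Sigk a (x 1) (x 2);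
    0, -Sigk a (x 1) (x 2) / Delk M a (x 1), 0, 0;
    0, 0, -Sigk a (x 1) (x 2), 0;
    2 * M * a * x 1 * sin (x 2) ^ 2 / Sigk a (x 1) (x 2), 0, 0,
      -sin (x 2) ^ 2 * ((x 1 ^ 2 + a ^ 2) ^ 2 -
          a ^ 2 * Delk M a (x 1) * sin (x 2) ^ 2) / Sigk a (x 1) (x 2)]

/-- Christoffel symbols of the Kerr metric. -/
def kerrChristoffel (M a : ℝ) (i j k : Fin 4) (x : Fin 4 → ℝ) : ℝ :=
  (1 / 2) * ∑ l, (kerrMetric M a x)⁻¹ i l *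
    (pd j (fun y => kerrMetric M a y l k) x + pd k (fun y => kerrMetric M a y j l) x
      - pd l (fun y => kerrMetric M a y j k) x)

/-- Symmetric-frame vector e₀ (Boyer–Lindquist components). -/
def e0 (M a r ϑ : ℝ) : Fin 4 → ℝ :=
  ![(r ^ 2 + a ^ 2) / Real.sqrt (Sigk a r ϑ * Delk M a r), 0, 0,
    a / Real.sqrt (Sigk a r ϑ * Delk M a r)]

/-- Symmetric-frame vector e₁. -/
def e1 (M a r ϑ : ℝ) : Fin 4 → ℝ :=
  ![0, Real.sqrt (Delk M a r / Sigk a r ϑ), 0, 0]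

/-- Symmetric-frame vector e₂. -/
def e2 (a r ϑ : ℝ) : Fin 4 → ℝ :=
  ![-(a * Real.sin ϑ) / Real.sqrt (Sigk a r ϑ), 0, 0,
    -(1 / (Real.sqrt (Sigk a r ϑ) * Real.sin ϑ))]

/-- Symmetric-frame vector e₃. -/
def e3 (a r ϑ : ℝ) : Fin 4 → ℝ :=
  ![0, 0, 1 / Real.sqrt (Sigk a r ϑ), 0]

/-- The tangent vector L₀ := ẋ along the curve x. -/
def L0vec (x : ℝ → Fin 4 → ℝ) (t : ℝ) : Fin 4 → ℝ :=
  fun i => deriv (fun s => x s i) t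

/-- The Marck vector L₃ along the curve x. -/
def L3vec (M a E Φ κ : ℝ) (x : ℝ → Fin 4 → ℝ) (t : ℝ) : Fin 4 → ℝ :=
  (1 / Real.sqrt (κ * Sigk a (x t 1) (x t 2))) •
    ((a * Real.cos (x t 2) * Real.sqrt (Rk M a E Φ κ (x t 1)) /
        Real.sqrt (Delk M a (x t 1))) • e0 M a (x t 1) (x t 2)
      + (a * Real.cos (x t 2) * Pk a E Φ (x t 1) /
          Real.sqrt (Delk M a (x t 1))) • e1 M a (x t 1) (x t 2)
      + (x t 1 * Real.sqrt (Thk a E Φ κ (x t 2))) • e2 a (x t 1) (x t 2)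
      - (x t 1 * Dk a E Φ (x t 2)) • e3 a (x t 1) (x t 2))

/-- The auxiliary Marck vector L̃₁ along the curve x. -/
def Lt1vec (M a E Φ κ : ℝ) (x : ℝ → Fin 4 → ℝ) (t : ℝ) : Fin 4 → ℝ :=
  (1 / Real.sqrt (κ * Sigk a (x t 1) (x t 2))) •
    ((Real.sqrt (piomk a κ (x t 1) (x t 2)) * x t 1 *
        Real.sqrt (Rk M a E Φ κ (x t 1)) /
          Real.sqrt (Delk M a (x t 1))) • e0 M a (x t 1) (x t 2)
      + (Real.sqrt (piomk a κ (x t 1) (x t 2)) * x t 1 * Pk a E Φ (x t 1) /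
          Real.sqrt (Delk M a (x t 1))) • e1 M a (x t 1) (x t 2)
      - (a * Real.cos (x t 2) / Real.sqrt (piomk a κ (x t 1) (x t 2)) *
          Real.sqrt (Thk a E Φ κ (x t 2))) • e2 a (x t 1) (x t 2)
      + (a * Real.cos (x t 2) / Real.sqrt (piomk a κ (x t 1) (x t 2)) *
          Dk a E Φ (x t 2)) • e3 a (x t 1) (x t 2))

/-- The auxiliary Marck vector L̃₂ along the curve x. -/
def Lt2vec (M a E Φ κ : ℝ) (x : ℝ → Fin 4 → ℝ) (t : ℝ) : Fin 4 → ℝ :=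
  (1 / Real.sqrt (Sigk a (x t 1) (x t 2))) •
    ((Real.sqrt (piomk a κ (x t 1) (x t 2)) * Pk a E Φ (x t 1) /
        Real.sqrt (Delk M a (x t 1))) • e0 M a (x t 1) (x t 2)
      + (Real.sqrt (piomk a κ (x t 1) (x t 2)) *
          Real.sqrt (Rk M a E Φ κ (x t 1)) /
            Real.sqrt (Delk M a (x t 1))) • e1 M a (x t 1) (x t 2)
      + (Dk a E Φ (x t 2) / Real.sqrt (piomk a κ (x t 1) (x t 2))) •
          e2 a (x t 1) (x t 2)
      + (Real.sqrt (Thk a E Φ κ (x t 2)) /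
          Real.sqrt (piomk a κ (x t 1) (x t 2))) • e3 a (x t 1) (x t 2))

/-- The rotated Marck vector L₁. -/
def L1vec (M a E Φ κ : ℝ) (x : ℝ → Fin 4 → ℝ) (Φhat : ℝ → ℝ) (t : ℝ) :
    Fin 4 → ℝ :=
  Real.cos (Φhat t) • Lt1vec M a E Φ κ x t - Real.sin (Φhat t) • Lt2vec M a E Φ κ x t

/-- The rotated Marck vector L₂. -/
def L2vec (M a E Φ κ : ℝ) (x : ℝ → Fin 4 → ℝ) (Φhat : ℝ → ℝ) (t : ℝ) :
    Fin 4 → ℝ :=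
  Real.sin (Φhat t) • Lt1vec M a E Φ κ x t + Real.cos (Φhat t) • Lt2vec M a E Φ κ x t

/-- A vector field L along the curve x is parallel propagated at τ. -/
def ParallelAt (M a : ℝ) (x : ℝ → Fin 4 → ℝ) (L : ℝ → Fin 4 → ℝ) (τ : ℝ) : Prop :=
  ∀ i, deriv (fun t => L t i) τ
    + ∑ j, ∑ k, kerrChristoffel M a i j k (x τ) * deriv (fun t => x t j) τ * L τ k
    = 0

/-!
In the Carter frame, rescaled to make the coframe polynomial in `r`, `sin ϑ` and `cos ϑ`, the
Christoffel symbols become an explicit matrix-valued connection form: being torsion-free and metric,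
it is the Levi-Civita connection. Hence a field is parallel along `x` iff its frame components `m`
satisfy `m' = -A m`, with `A` the connection form evaluated on `ẋ`. The frame components of `ẋ` are
`(𝒫, √R, 𝒟, √Θ)`. The Killing–Yano form maps the parallel vector `ẋ` to the parallel vector
`√κ L₃`. Its Hodge dual, followed by the scaling by `√ϖ` and `1/√ϖ` in the two blocks, maps `ẋ` to
`√κ L̃₁`, while the scaling alone maps it to `L̃₂`; these two vectors rotate into each other at
Marck's rate, and turning them by `Φ̂` undoes the rotation.
-/

open Filter Matrix Real Topology

lemma christoffel_unique {n : Type*} [Fintype n] [DecidableEq n] {g : Matrix n n ℝ}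
    (hg : IsUnit g.det) (hgT : gᵀ = g) {G dg : n → Matrix n n ℝ}
    (hsymm : ∀ i j k, G j i k = G k i j) (hcompat : ∀ j, dg j = (G j)ᵀ * g + g * G j)
    (i j k : n) :
    (1 / 2) * ∑ l, g⁻¹ i l * (dg j l k + dg k j l - dg l j k) = G j i k := by
  have hlower (l : n) : dg j l k + dg k j l - dg l j k = 2 * (g * G j) l k := by
    have hT (u v w : n) : ((G u)ᵀ * g) v w = (g * G u) w v := by
      rw [← transpose_apply (g * G u), transpose_mul, hgT]
    have hswap (u v w : n) : (g * G u) v w = (g * G w) v u := by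
      simp only [mul_apply, hsymm _ u w]
    simp only [hcompat, Matrix.add_apply, hT]
    rw [hswap j k l, hswap k l j, hswap k j l]
    ring
  calc (1 / 2) * ∑ l, g⁻¹ i l * (dg j l k + dg k j l - dg l j k)
      = ∑ l, g⁻¹ i l * (g * G j) l k := by
        simp only [hlower, Finset.mul_sum]
        exact Finset.sum_congr rfl fun l _ => by ring
    _ = (g⁻¹ * (g * G j)) i k := (mul_apply ..).symm
    _ = G j i k := by rw [nonsing_inv_mul_cancel_left _ _ hg]

lemma compatible_of_frame {n : Type*} [Fintype n] [DecidableEq n] {C F : Matrix n n ℝ}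
    (hCF : C * F = 1) (H A C' : Matrix n n ℝ) :
    (C'ᵀ * H + Cᵀ * (Aᵀ * H + H * A)) * C + Cᵀ * H * C' =
      (F * (C' + A * C))ᵀ * (Cᵀ * H * C) + Cᵀ * H * C * (F * (C' + A * C)) := by
  have hleft : (F * (C' + A * C))ᵀ * (Cᵀ * H * C) = (C' + A * C)ᵀ * H * C := by
    rw [← mul_assoc, ← mul_assoc, ← transpose_mul, ← mul_assoc C F, hCF, one_mul]
  have hright : Cᵀ * H * C * (F * (C' + A * C)) = Cᵀ * H * (C' + A * C) := by
    rw [mul_assoc _ C, ← mul_assoc C F, hCF, one_mul]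
  rw [hleft, hright, transpose_add, transpose_mul]
  noncomm_ring

lemma pd_eq_of_hasDerivAt_line {f : (Fin 4 → ℝ) → ℝ} {x : Fin 4 → ℝ} {i : Fin 4} {f' : ℝ}
    (hf : DifferentiableAt ℝ f x)
    (h : HasDerivAt (fun t : ℝ => f (x + t • Pi.single i 1)) f' 0) : pd i f x = f' :=
  hf.lineDeriv_eq_fderiv.symm.trans h.deriv

lemma hasDerivAt_matrix_mul {l m n : Type*} [Fintype m] {A : ℝ → Matrix l m ℝ}
    {A' : Matrix l m ℝ} {B : ℝ → Matrix m n ℝ} {B' : Matrix m n ℝ} {τ : ℝ}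
    (hA : ∀ i j, HasDerivAt (fun t => A t i j) (A' i j) τ)
    (hB : ∀ i j, HasDerivAt (fun t => B t i j) (B' i j) τ) (i : l) (k : n) :
    HasDerivAt (fun t => (A t * B t) i k) ((A' * B τ + A τ * B') i k) τ := by
  have hsum := HasDerivAt.fun_sum fun j (_ : j ∈ Finset.univ) => (hA i j).mul (hB j k)
  exact hsum.congr_deriv Finset.sum_add_distrib

lemma hasDerivAt_mulVec {m n : Type*} [Finite m] [Fintype n] {A : ℝ → Matrix m n ℝ}
    {A' : Matrix m n ℝ} {l : ℝ → n → ℝ} {l' : n → ℝ} {τ : ℝ}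
    (hA : ∀ i j, HasDerivAt (fun t => A t i j) (A' i j) τ) (hl : HasDerivAt l l' τ) :
    HasDerivAt (fun t => A t *ᵥ l t) (A' *ᵥ l τ + A τ *ᵥ l') τ := by
  have := Fintype.ofFinite m
  refine hasDerivAt_pi.2 fun i => ?_
  have hsum := HasDerivAt.fun_sum fun j (_ : j ∈ Finset.univ) =>
    (hA i j).mul (hasDerivAt_pi.1 hl j)
  exact hsum.congr_deriv Finset.sum_add_distrib

/-- The covariant derivative of an endomorphism field with frame matrix `T` and derivative `T'`,
in a frame with connection matrix `A`. -/
def frameCovDeriv {n : Type*} [Fintype n] (A T' T : Matrix n n ℝ) : Matrix n n ℝ :=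
  T' + A * T - T * A

lemma hasDerivAt_mulVec_of_hasDerivAt_neg {n : Type*} [Fintype n] {T : ℝ → Matrix n n ℝ}
    {T' A : Matrix n n ℝ} {u : ℝ → n → ℝ} {τ : ℝ}
    (hT : ∀ i j, HasDerivAt (fun t => T t i j) (T' i j) τ) (hu : HasDerivAt u (-(A *ᵥ u τ)) τ) :
    HasDerivAt (fun t => T t *ᵥ u t)
      (frameCovDeriv A T' (T τ) *ᵥ u τ - A *ᵥ (T τ *ᵥ u τ)) τ := by
  refine (hasDerivAt_mulVec hT hu).congr_deriv ?_
  simp only [frameCovDeriv, sub_mulVec, add_mulVec, mulVec_neg, mulVec_mulVec]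
  abel

lemma hasDerivAt_cos_smul_sub_sin_smul {F : Type*} [NormedAddCommGroup F] [NormedSpace ℝ F]
    {A : F →ₗ[ℝ] F} {φ : ℝ → ℝ} {φ' τ : ℝ} {m₁ m₂ : ℝ → F} (hφ : HasDerivAt φ φ' τ)
    (h₁ : HasDerivAt m₁ (φ' • m₂ τ - A (m₁ τ)) τ)
    (h₂ : HasDerivAt m₂ (-φ' • m₁ τ - A (m₂ τ)) τ) :
    HasDerivAt (fun t => Real.cos (φ t) • m₁ t - Real.sin (φ t) • m₂ t)
      (-A (Real.cos (φ τ) • m₁ τ - Real.sin (φ τ) • m₂ τ)) τ := by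
  refine ((hφ.cos.smul h₁).sub (hφ.sin.smul h₂)).congr_deriv ?_
  simp only [map_sub, map_smul]
  module

lemma hasDerivAt_sin_smul_add_cos_smul {F : Type*} [NormedAddCommGroup F] [NormedSpace ℝ F]
    {A : F →ₗ[ℝ] F} {φ : ℝ → ℝ} {φ' τ : ℝ} {m₁ m₂ : ℝ → F} (hφ : HasDerivAt φ φ' τ)
    (h₁ : HasDerivAt m₁ (φ' • m₂ τ - A (m₁ τ)) τ)
    (h₂ : HasDerivAt m₂ (-φ' • m₁ τ - A (m₂ τ)) τ) :
    HasDerivAt (fun t => Real.sin (φ t) • m₁ t + Real.cos (φ t) • m₂ t)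
      (-A (Real.sin (φ τ) • m₁ τ + Real.cos (φ τ) • m₂ τ)) τ := by
  refine ((hφ.sin.smul h₁).add (hφ.cos.smul h₂)).congr_deriv ?_
  simp only [map_add, map_smul]
  module

/-- The derivative of `Σ` at `x` in the direction `V`. -/
def SigkDeriv (a : ℝ) (x V : Fin 4 → ℝ) : ℝ :=
  2 * x 1 * V 1 - 2 * a ^ 2 * sin (x 2) * cos (x 2) * V 2

/-- The derivative of `Δ` at `x` in the direction `V`. -/
def DelkDeriv (M : ℝ) (x V : Fin 4 → ℝ) : ℝ :=
  (2 * x 1 - 2 * M) * V 1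

/-- The symmetric coframe dual to `e₀, …, e₃`, with its rows multiplied by `√(ΣΔ)`, `√(ΣΔ)`,
`√Σ`, `√Σ` so that its entries are polynomials in `r`, `sin ϑ` and `cos ϑ`. -/
def carterCoframe (M a : ℝ) (x : Fin 4 → ℝ) : Matrix (Fin 4) (Fin 4) ℝ :=
  !![Delk M a (x 1), 0, 0, -(a * sin (x 2) ^ 2 * Delk M a (x 1));
    0, Sigk a (x 1) (x 2), 0, 0;
    a * sin (x 2), 0, 0, -(sin (x 2) * (x 1 ^ 2 + a ^ 2));
    0, 0, Sigk a (x 1) (x 2), 0]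

/-- The frame dual to `carterCoframe`: its columns are rescaled copies of `e₀, …, e₃`. -/
def carterFrame (M a : ℝ) (x : Fin 4 → ℝ) : Matrix (Fin 4) (Fin 4) ℝ :=
  !![(x 1 ^ 2 + a ^ 2) / (Sigk a (x 1) (x 2) * Delk M a (x 1)), 0,
      -(a * sin (x 2)) / Sigk a (x 1) (x 2), 0;
    0, 1 / Sigk a (x 1) (x 2), 0, 0;
    0, 0, 0, 1 / Sigk a (x 1) (x 2);
    a / (Sigk a (x 1) (x 2) * Delk M a (x 1)), 0,
      -1 / (Sigk a (x 1) (x 2) * sin (x 2)), 0]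

/-- The Gram matrix of `carterFrame` in the Kerr metric. -/
def carterGram (M a : ℝ) (x : Fin 4 → ℝ) : Matrix (Fin 4) (Fin 4) ℝ :=
  diagonal ![1 / (Sigk a (x 1) (x 2) * Delk M a (x 1)),
    -(1 / (Sigk a (x 1) (x 2) * Delk M a (x 1))),
    -(1 / Sigk a (x 1) (x 2)), -(1 / Sigk a (x 1) (x 2))]

/-- The derivative of `carterCoframe` at `x` in the direction `V`. -/
def carterCoframeDeriv (M a : ℝ) (x V : Fin 4 → ℝ) : Matrix (Fin 4) (Fin 4) ℝ :=
  !![DelkDeriv M x V, 0, 0, -(a * (2 * sin (x 2) * cos (x 2) * V 2 * Delk M a (x 1) +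
        sin (x 2) ^ 2 * DelkDeriv M x V));
    0, SigkDeriv a x V, 0, 0;
    a * (cos (x 2) * V 2), 0, 0,
      -(cos (x 2) * V 2 * (x 1 ^ 2 + a ^ 2) + sin (x 2) * (2 * x 1 * V 1));
    0, 0, SigkDeriv a x V, 0]

/-- The Levi-Civita connection form of the Kerr metric in `carterFrame`, evaluated on the vector
with frame components `v`. It is determined by `carterConnection_torsion_free` and
`hasDerivAt_carterGram` (metric compatibility). -/
def carterConnection (M a : ℝ) (x v : Fin 4 → ℝ) : Matrix (Fin 4) (Fin 4) ℝ :=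
  let r := x 1
  let s := sin (x 2)
  let c := cos (x 2)
  let D := Delk M a r
  let S := Sigk a r (x 2)
  let h := S * (r - M) / D
  let k := S * c / s
  (1 / S ^ 2) •
  !![a ^ 2 * s * c * v 3 - (h + r) * v 1, (h - r) * v 0 + r * a * s * v 2,
      r * a * s * v 1 - a * c * D * v 3, a * c * D * v 2 - a ^ 2 * s * c * v 0;
    (h - r) * v 0 + r * a * s * v 2, a ^ 2 * s * c * v 3 - (h + r) * v 1,
      r * a * s * v 0 - r * D * v 2, -(a ^ 2 * s * c * v 1) - r * D * v 3;
    r * a * s * v 1 / D - a * c * v 3, r * v 2 - r * a * s * v 0 / D,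
      a ^ 2 * s * c * v 3 - r * v 1, (k + a ^ 2 * s * c) * v 2 - a * c * v 0;
    a * c * v 2 - a ^ 2 * s * c * v 0 / D, r * v 3 + a ^ 2 * s * c * v 1 / D,
      a * c * v 0 - (k + a ^ 2 * s * c) * v 2, a ^ 2 * s * c * v 3 - r * v 1]

/-- The matrix of `L ↦ Γ(V, L)` in Boyer–Lindquist coordinates, obtained from the connection form
by the change of frame. -/
def carterChristoffel (M a : ℝ) (x V : Fin 4 → ℝ) : Matrix (Fin 4) (Fin 4) ℝ :=
  carterFrame M a x * (carterCoframeDeriv M a x V +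
    carterConnection M a x (carterCoframe M a x *ᵥ V) * carterCoframe M a x)

section Point

variable {M a : ℝ} {x : Fin 4 → ℝ}

lemma Sigk_eq_sub_sin (r ϑ : ℝ) : Sigk a r ϑ = r ^ 2 + a ^ 2 - a ^ 2 * sin ϑ ^ 2 := by
  rw [Sigk, cos_sq']
  ring

lemma carterCoframe_mul_carterFrame (hSig : Sigk a (x 1) (x 2) ≠ 0) (hΔ : Delk M a (x 1) ≠ 0)
    (hsin : sin (x 2) ≠ 0) : carterCoframe M a x * carterFrame M a x = 1 := by
  have hS := Sigk_eq_sub_sin (a := a) (x 1) (x 2)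
  ext i j
  fin_cases i <;> fin_cases j <;>
    simp [carterCoframe, carterFrame, mul_apply, Fin.sum_univ_four] <;>
    field_simp <;> rw [hS] <;> ring

lemma kerrMetric_eq_transpose_mul_mul (hSig : Sigk a (x 1) (x 2) ≠ 0)
    (hΔ : Delk M a (x 1) ≠ 0) :
    kerrMetric M a x = (carterCoframe M a x)ᵀ * carterGram M a x * carterCoframe M a x := by
  have hDel : Delk M a (x 1) = x 1 ^ 2 - 2 * M * x 1 + a ^ 2 := rfl
  ext i j
  fin_cases i <;> fin_cases j <;>
    simp [kerrMetric, carterCoframe, carterGram, mul_apply, Fin.sum_univ_four] <;> field_simp <;>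
    first | ring1 | rw [hDel]; ring

lemma carterConnection_torsion_free (hSig : Sigk a (x 1) (x 2) ≠ 0) (hΔ : Delk M a (x 1) ≠ 0)
    (hsin : sin (x 2) ≠ 0) (V W : Fin 4 → ℝ) :
    (carterCoframeDeriv M a x V +
        carterConnection M a x (carterCoframe M a x *ᵥ V) * carterCoframe M a x) *ᵥ W =
      (carterCoframeDeriv M a x W +
        carterConnection M a x (carterCoframe M a x *ᵥ W) * carterCoframe M a x) *ᵥ V := by
  have hS := Sigk_eq_sub_sin (a := a) (x 1) (x 2)
  ext i
  fin_cases i <;>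
    simp [carterCoframeDeriv, carterConnection, carterCoframe, SigkDeriv, DelkDeriv, mulVec,
      dotProduct, Fin.sum_univ_four] <;>
    field_simp <;> rw [hS] <;> ring

lemma carterChristoffel_mulVec_comm (hSig : Sigk a (x 1) (x 2) ≠ 0) (hΔ : Delk M a (x 1) ≠ 0)
    (hsin : sin (x 2) ≠ 0) (V W : Fin 4 → ℝ) :
    carterChristoffel M a x V *ᵥ W = carterChristoffel M a x W *ᵥ V := by
  rw [carterChristoffel, carterChristoffel, ← mulVec_mulVec, ← mulVec_mulVec,
    carterConnection_torsion_free hSig hΔ hsin]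

lemma kerrMetric_transpose : (kerrMetric M a x)ᵀ = kerrMetric M a x := by
  ext i j
  fin_cases i <;> fin_cases j <;> rfl

lemma isUnit_det_kerrMetric (hSig : Sigk a (x 1) (x 2) ≠ 0) (hΔ : Delk M a (x 1) ≠ 0)
    (hsin : sin (x 2) ≠ 0) : IsUnit (kerrMetric M a x).det := by
  have hC : IsUnit (carterCoframe M a x).det :=
    IsUnit.of_mul_eq_one _ (by
      rw [← det_mul, carterCoframe_mul_carterFrame hSig hΔ hsin, det_one])
  have hG : IsUnit (carterGram M a x).det := by
    simp [carterGram, Fin.prod_univ_four, hSig, hΔ]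
  rw [kerrMetric_eq_transpose_mul_mul hSig hΔ, det_mul, det_mul, det_transpose]
  exact (hC.mul hG).mul hC

lemma isLinearMap_carterChristoffel : IsLinearMap ℝ (carterChristoffel M a x) := by
  have hC' : IsLinearMap ℝ (carterCoframeDeriv M a x) := by
    constructor <;> intros <;> ext i j <;> fin_cases i <;> fin_cases j <;>
      simp [carterCoframeDeriv, SigkDeriv, DelkDeriv] <;> ring
  have hA : IsLinearMap ℝ (carterConnection M a x) := by
    constructor <;> intros <;> ext i j <;> fin_cases i <;> fin_cases j <;>
      simp [carterConnection] <;> ring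
  constructor
  · intro V W
    simp only [carterChristoffel, mulVec_add, hC'.map_add, hA.map_add, add_mul, mul_add]
    abel
  · intro b V
    simp only [carterChristoffel, mulVec_smul, hC'.map_smul, hA.map_smul, Matrix.smul_mul,
      Matrix.mul_smul, ← smul_add]

end Point

section Curve

variable {M a : ℝ} {x : ℝ → Fin 4 → ℝ} {V : Fin 4 → ℝ} {τ : ℝ}

lemma hasDerivAt_Sigk (hx : HasDerivAt x V τ) :
    HasDerivAt (fun t => Sigk a (x t 1) (x t 2)) (SigkDeriv a (x τ) V) τ := by
  have hr := hasDerivAt_pi.1 hx 1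
  have hϑ := hasDerivAt_pi.1 hx 2
  refine ((hr.pow 2).add ((hϑ.cos.pow 2).const_mul (a ^ 2))).congr_deriv ?_
  simp only [SigkDeriv]
  push_cast
  ring

lemma hasDerivAt_Delk (hx : HasDerivAt x V τ) :
    HasDerivAt (fun t => Delk M a (x t 1)) (DelkDeriv M (x τ) V) τ := by
  have hr := hasDerivAt_pi.1 hx 1
  refine (((hr.pow 2).sub (hr.const_mul (2 * M))).add_const (a ^ 2)).congr_deriv ?_
  simp only [DelkDeriv]
  push_cast
  ring

lemma hasDerivAt_carterCoframe (hx : HasDerivAt x V τ) (i j : Fin 4) :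
    HasDerivAt (fun t => carterCoframe M a (x t) i j) (carterCoframeDeriv M a (x τ) V i j) τ := by
  have hr := hasDerivAt_pi.1 hx 1
  have hS := hasDerivAt_Sigk (a := a) hx
  have hD := hasDerivAt_Delk (M := M) (a := a) hx
  have hs := (hasDerivAt_pi.1 hx 2).sin
  have h03 := (((hs.pow 2).const_mul a).mul hD).neg
  have h23 := (hs.mul ((hr.pow 2).add_const (a ^ 2))).neg
  fin_cases i <;> fin_cases j <;> first
    | exact hasDerivAt_const _ _
    | exact hD
    | exact hS
    | exact hs.const_mul a
    | refine h03.congr_deriv ?_; simp [carterCoframeDeriv]; ring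
    | refine h23.congr_deriv ?_; simp [carterCoframeDeriv]

lemma hasDerivAt_carterGram (hx : HasDerivAt x V τ) (hSig : Sigk a (x τ 1) (x τ 2) ≠ 0)
    (hΔ : Delk M a (x τ 1) ≠ 0) (i j : Fin 4) :
    HasDerivAt (fun t => carterGram M a (x t) i j)
      (((carterConnection M a (x τ) (carterCoframe M a (x τ) *ᵥ V))ᵀ * carterGram M a (x τ) +
        carterGram M a (x τ) * carterConnection M a (x τ) (carterCoframe M a (x τ) *ᵥ V)) i j)
      τ := by
  have hS := hasDerivAt_Sigk (a := a) hx
  have hSD := (hS.mul (hasDerivAt_Delk (M := M) (a := a) hx)).inv (mul_ne_zero hSig hΔ)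
  have hS := hS.inv hSig
  simp only [carterGram, one_div]
  fin_cases i <;> fin_cases j <;> first
    | refine (hasDerivAt_const τ (0 : ℝ)).congr_deriv ?_
    | refine hSD.congr_deriv ?_
    | refine hSD.neg.congr_deriv ?_
    | refine hS.neg.congr_deriv ?_
  all_goals
    simp [carterConnection, carterCoframe, mulVec, dotProduct, Fin.sum_univ_four, SigkDeriv,
      DelkDeriv]
    field_simp
    ring

lemma hasDerivAt_kerrMetric (hx : HasDerivAt x V τ) (hSig : Sigk a (x τ 1) (x τ 2) ≠ 0)
    (hΔ : Delk M a (x τ 1) ≠ 0) (hsin : sin (x τ 2) ≠ 0) (l k : Fin 4) :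
    HasDerivAt (fun t => kerrMetric M a (x t) l k)
      (((carterChristoffel M a (x τ) V)ᵀ * kerrMetric M a (x τ) +
        kerrMetric M a (x τ) * carterChristoffel M a (x τ) V) l k) τ := by
  have hC := hasDerivAt_carterCoframe (M := M) (a := a) hx
  have hprod := hasDerivAt_matrix_mul (A := fun t => (carterCoframe M a (x t))ᵀ * _)
    (hasDerivAt_matrix_mul (A' := (carterCoframeDeriv M a (x τ) V)ᵀ) (fun i j => hC j i)
      (hasDerivAt_carterGram hx hSig hΔ)) hC l k
  have hfactor : ∀ᶠ t in 𝓝 τ, kerrMetric M a (x t) = (carterCoframe M a (x t))ᵀ *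
      carterGram M a (x t) * carterCoframe M a (x t) := by
    filter_upwards [(hasDerivAt_Sigk hx).continuousAt.eventually_ne hSig,
      (hasDerivAt_Delk hx).continuousAt.eventually_ne hΔ] with t hSigt hΔt
    exact kerrMetric_eq_transpose_mul_mul hSigt hΔt
  refine (hprod.congr_of_eventuallyEq (hfactor.mono fun t ht => by rw [ht])).congr_deriv ?_
  rw [compatible_of_frame (carterCoframe_mul_carterFrame hSig hΔ hsin), carterChristoffel,
    ← kerrMetric_eq_transpose_mul_mul hSig hΔ]

end Curve

section Christoffel

variable {M a : ℝ} {x : Fin 4 → ℝ}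

lemma differentiableAt_kerrMetric (hSig : Sigk a (x 1) (x 2) ≠ 0) (hΔ : Delk M a (x 1) ≠ 0)
    (l k : Fin 4) : DifferentiableAt ℝ (fun y => kerrMetric M a y l k) x := by
  have hdSig : DifferentiableAt ℝ (fun y : Fin 4 → ℝ => Sigk a (y 1) (y 2)) x := by
    unfold Sigk; fun_prop
  have hdΔ : DifferentiableAt ℝ (fun y : Fin 4 → ℝ => Delk M a (y 1)) x := by
    unfold Delk; fun_prop
  fin_cases l <;> fin_cases k <;>
    simp only [kerrMetric, of_apply, cons_val', cons_val, cons_val_zero, cons_val_one,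
      cons_val_fin_one, Fin.mk_one, Fin.zero_eta, Fin.reduceFinMk] <;>
    fun_prop (disch := assumption)

lemma pd_kerrMetric (hSig : Sigk a (x 1) (x 2) ≠ 0) (hΔ : Delk M a (x 1) ≠ 0)
    (hsin : sin (x 2) ≠ 0) (j l k : Fin 4) :
    pd j (fun y => kerrMetric M a y l k) x =
      ((carterChristoffel M a x (Pi.single j 1))ᵀ * kerrMetric M a x +
        kerrMetric M a x * carterChristoffel M a x (Pi.single j 1)) l k := by
  refine pd_eq_of_hasDerivAt_line (differentiableAt_kerrMetric hSig hΔ l k) ?_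
  have hline : HasDerivAt (fun t : ℝ => x + t • (Pi.single j 1 : Fin 4 → ℝ))
      (Pi.single j 1) 0 := by
    simpa using ((hasDerivAt_id (0 : ℝ)).smul_const (Pi.single j (1 : ℝ))).const_add x
  simpa using hasDerivAt_kerrMetric hline (by simpa using hSig) (by simpa using hΔ)
    (by simpa using hsin) l k

lemma kerrChristoffel_eq (hSig : Sigk a (x 1) (x 2) ≠ 0) (hΔ : Delk M a (x 1) ≠ 0)
    (hsin : sin (x 2) ≠ 0) (i j k : Fin 4) :
    kerrChristoffel M a i j k x = carterChristoffel M a x (Pi.single j 1) i k := by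
  simp only [kerrChristoffel, pd_kerrMetric hSig hΔ hsin]
  refine christoffel_unique (G := fun j => carterChristoffel M a x (Pi.single j 1))
    (isUnit_det_kerrMetric hSig hΔ hsin) kerrMetric_transpose (fun i j k => ?_) (fun j => rfl)
    i j k
  simpa using congrFun (carterChristoffel_mulVec_comm hSig hΔ hsin (Pi.single j 1)
    (Pi.single k 1)) i

lemma sum_kerrChristoffel_mul (hSig : Sigk a (x 1) (x 2) ≠ 0) (hΔ : Delk M a (x 1) ≠ 0)
    (hsin : sin (x 2) ≠ 0) (V L : Fin 4 → ℝ) (i : Fin 4) :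
    ∑ j, ∑ k, kerrChristoffel M a i j k x * V j * L k = (carterChristoffel M a x V *ᵥ L) i := by
  have hV : carterChristoffel M a x V = ∑ j, V j • carterChristoffel M a x (Pi.single j 1) := by
    conv_lhs => rw [pi_eq_sum_univ' V]
    exact (map_sum isLinearMap_carterChristoffel.mk' _ _).trans <|
      Finset.sum_congr rfl fun j _ => isLinearMap_carterChristoffel.map_smul _ _
  rw [hV, sum_mulVec, Finset.sum_apply]
  simp only [kerrChristoffel_eq hSig hΔ hsin, mulVec, dotProduct, Matrix.smul_apply, smul_eq_mul]
  exact Finset.sum_congr rfl fun j _ => Finset.sum_congr rfl fun k _ => by ring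

end Christoffel

section ParallelTransport

variable {M a : ℝ} {x : ℝ → Fin 4 → ℝ} {V : Fin 4 → ℝ} {L : ℝ → Fin 4 → ℝ} {τ : ℝ}

lemma differentiableAt_carterFrame (hx : HasDerivAt x V τ) (hSig : Sigk a (x τ 1) (x τ 2) ≠ 0)
    (hΔ : Delk M a (x τ 1) ≠ 0) (hsin : sin (x τ 2) ≠ 0) (i j : Fin 4) :
    DifferentiableAt ℝ (fun t => carterFrame M a (x t) i j) τ := by
  have hxi (k : Fin 4) : DifferentiableAt ℝ (fun t => x t k) τ :=
    (hasDerivAt_pi.1 hx k).differentiableAt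
  have hdSig := (hasDerivAt_Sigk (a := a) hx).differentiableAt
  have hdΔ := (hasDerivAt_Delk (M := M) (a := a) hx).differentiableAt
  have hSigΔ := mul_ne_zero hSig hΔ
  have hSigsin := mul_ne_zero hSig hsin
  fin_cases i <;> fin_cases j <;>
    simp only [carterFrame, of_apply, cons_val', cons_val, cons_val_zero, cons_val_one,
      cons_val_fin_one, Fin.mk_one, Fin.zero_eta, Fin.reduceFinMk] <;>
    fun_prop (disch := assumption)

lemma differentiableAt_of_carterCoframe_mulVec (hx : HasDerivAt x V τ)
    (hSig : Sigk a (x τ 1) (x τ 2) ≠ 0) (hΔ : Delk M a (x τ 1) ≠ 0) (hsin : sin (x τ 2) ≠ 0)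
    (hL : DifferentiableAt ℝ (fun t => carterCoframe M a (x t) *ᵥ L t) τ) :
    DifferentiableAt ℝ L τ := by
  have hFC : L =ᶠ[𝓝 τ] fun t => carterFrame M a (x t) *ᵥ (carterCoframe M a (x t) *ᵥ L t) := by
    filter_upwards [(hasDerivAt_Sigk hx).continuousAt.eventually_ne hSig,
      (hasDerivAt_Delk hx).continuousAt.eventually_ne hΔ,
      (hasDerivAt_pi.1 hx 2).sin.continuousAt.eventually_ne hsin] with t hSigt hΔt hsint
    rw [mulVec_mulVec, mul_eq_one_comm.1 (carterCoframe_mul_carterFrame hSigt hΔt hsint),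
      one_mulVec]
  have hF := differentiableAt_carterFrame hx hSig hΔ hsin
  exact (hasDerivAt_mulVec (fun i j => (hF i j).hasDerivAt) hL.hasDerivAt).differentiableAt
    |>.congr_of_eventuallyEq hFC

lemma parallelAt_iff_deriv_eq (hx : HasDerivAt x V τ) (hSig : Sigk a (x τ 1) (x τ 2) ≠ 0)
    (hΔ : Delk M a (x τ 1) ≠ 0) (hsin : sin (x τ 2) ≠ 0) (hL : DifferentiableAt ℝ L τ) :
    ParallelAt M a x L τ ↔ deriv L τ + carterChristoffel M a (x τ) V *ᵥ L τ = 0 := by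
  have hLi (i : Fin 4) : deriv (fun t => L t i) τ = deriv L τ i :=
    (hasDerivAt_pi.1 hL.hasDerivAt i).deriv
  have hxi (i : Fin 4) : deriv (fun t => x t i) τ = V i := (hasDerivAt_pi.1 hx i).deriv
  simp only [ParallelAt, hLi, hxi, sum_kerrChristoffel_mul hSig hΔ hsin, funext_iff,
    Pi.add_apply, Pi.zero_apply]

lemma parallelAt_iff_hasDerivAt_carterCoframe (hx : HasDerivAt x V τ)
    (hSig : Sigk a (x τ 1) (x τ 2) ≠ 0) (hΔ : Delk M a (x τ 1) ≠ 0) (hsin : sin (x τ 2) ≠ 0)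
    (hL : DifferentiableAt ℝ L τ) :
    ParallelAt M a x L τ ↔ HasDerivAt (fun t => carterCoframe M a (x t) *ᵥ L t)
      (-(carterConnection M a (x τ) (carterCoframe M a (x τ) *ᵥ V) *ᵥ
        (carterCoframe M a (x τ) *ᵥ L τ))) τ := by
  set C := carterCoframe M a (x τ)
  set A := carterConnection M a (x τ) (C *ᵥ V)
  have hCF : C * carterFrame M a (x τ) = 1 := carterCoframe_mul_carterFrame hSig hΔ hsin
  have hC_inj : Function.Injective C.mulVec := mulVec_injective_of_isUnit (.of_mul_eq_one _ hCF)
  have hCL := hasDerivAt_mulVec (hasDerivAt_carterCoframe (M := M) (a := a) hx) hL.hasDerivAt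
  have hderiv : carterCoframeDeriv M a (x τ) V *ᵥ L τ + C *ᵥ deriv L τ =
      C *ᵥ (deriv L τ + carterChristoffel M a (x τ) V *ᵥ L τ) - A *ᵥ (C *ᵥ L τ) := by
    rw [carterChristoffel, mulVec_add, mulVec_mulVec, ← mul_assoc, hCF, one_mul, add_mulVec,
      ← mulVec_mulVec]
    abel
  rw [parallelAt_iff_deriv_eq hx hSig hΔ hsin hL, ← hC_inj.eq_iff, mulVec_zero]
  constructor
  · intro h
    exact hCL.congr_deriv (by rw [hderiv, h, zero_sub])
  · intro h
    have huniq := hCL.unique h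
    rwa [hderiv, sub_eq_neg_self] at huniq

lemma parallelAt_of_hasDerivAt_carterCoframe (hx : HasDerivAt x V τ)
    (hSig : Sigk a (x τ 1) (x τ 2) ≠ 0) (hΔ : Delk M a (x τ 1) ≠ 0) (hsin : sin (x τ 2) ≠ 0)
    (hL : HasDerivAt (fun t => carterCoframe M a (x t) *ᵥ L t)
      (-(carterConnection M a (x τ) (carterCoframe M a (x τ) *ᵥ V) *ᵥ
        (carterCoframe M a (x τ) *ᵥ L τ))) τ) :
    ParallelAt M a x L τ :=
  (parallelAt_iff_hasDerivAt_carterCoframe hx hSig hΔ hsin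
    (differentiableAt_of_carterCoframe_mulVec hx hSig hΔ hsin hL.differentiableAt)).2 hL

end ParallelTransport

/-- The matrix, in `carterFrame`, of a two-form with electric part `α` in the `e₀, e₁` plane and
magnetic part `β` in the `e₂, e₃` plane. -/
def blockSkew (α β : ℝ) : Matrix (Fin 4) (Fin 4) ℝ :=
  !![0, α, 0, 0; α, 0, 0, 0; 0, 0, 0, β; 0, 0, -β, 0]

/-- The Killing–Yano two-form of the Kerr metric. -/
def killingYano (a : ℝ) (x : Fin 4 → ℝ) : Matrix (Fin 4) (Fin 4) ℝ :=
  blockSkew (a * cos (x 2)) (x 1)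

/-- The Hodge dual of `killingYano`. -/
def hodgeKillingYano (a : ℝ) (x : Fin 4 → ℝ) : Matrix (Fin 4) (Fin 4) ℝ :=
  blockSkew (x 1) (-(a * cos (x 2)))

/-- The scaling by `q` in the `e₀, e₁` plane and by `p` in the `e₂, e₃` plane. -/
def blockScale (q p : ℝ) : Matrix (Fin 4) (Fin 4) ℝ :=
  !![q, 0, 0, 0; 0, q, 0, 0; 0, 0, p, 0; 0, 0, 0, p]

/-- Half the logarithmic derivative of `ϖ` along the vector with `carterFrame` components `v`. -/
def piomkRate (a κ : ℝ) (x v : Fin 4 → ℝ) : ℝ :=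
  (a ^ 2 * sin (x 2) * cos (x 2) * v 3 / (κ - a ^ 2 * cos (x 2) ^ 2) -
    x 1 * v 1 / (x 1 ^ 2 + κ)) / Sigk a (x 1) (x 2)

/-- Marck's rotation rate `dΦ̂/dτ`, divided by `√κ`, along the vector with `carterFrame` components
`v`. -/
def marckRate (a κ : ℝ) (x v : Fin 4 → ℝ) : ℝ :=
  (v 0 / (x 1 ^ 2 + κ) - a * sin (x 2) * v 2 / (κ - a ^ 2 * cos (x 2) ^ 2)) / Sigk a (x 1) (x 2)

section CovariantDerivative

variable {M a κ q p : ℝ} {x v : Fin 4 → ℝ}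

lemma frameCovDeriv_killingYano_mulVec (hSig : Sigk a (x 1) (x 2) ≠ 0) (hΔ : Delk M a (x 1) ≠ 0) :
    frameCovDeriv (carterConnection M a x v)
      (blockSkew (-(a * sin (x 2) * (v 3 / Sigk a (x 1) (x 2)))) (v 1 / Sigk a (x 1) (x 2)))
      (killingYano a x) *ᵥ v = 0 := by
  have hS : Sigk a (x 1) (x 2) = x 1 ^ 2 + a ^ 2 * cos (x 2) ^ 2 := rfl
  ext i
  fin_cases i <;>
    simp [frameCovDeriv, killingYano, blockSkew, carterConnection, mulVec, dotProduct,
      Fin.sum_univ_four] <;> field_simp <;> rw [hS] <;> ring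

lemma frameCovDeriv_blockScale_mulVec (hSig : Sigk a (x 1) (x 2) ≠ 0) (hΔ : Delk M a (x 1) ≠ 0)
    (hA : κ - a ^ 2 * cos (x 2) ^ 2 ≠ 0) (hB : x 1 ^ 2 + κ ≠ 0)
    (hpq : p * (κ - a ^ 2 * cos (x 2) ^ 2) = q * (x 1 ^ 2 + κ))
    (hv₀₁ : v 0 ^ 2 - v 1 ^ 2 = Delk M a (x 1) * (x 1 ^ 2 + κ))
    (hv₂₃ : v 2 ^ 2 + v 3 ^ 2 = κ - a ^ 2 * cos (x 2) ^ 2) :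
    frameCovDeriv (carterConnection M a x v)
        (blockScale (q * piomkRate a κ x v) (-(p * piomkRate a κ x v))) (blockScale q p) *ᵥ v =
      -marckRate a κ x v • (blockScale q p * hodgeKillingYano a x) *ᵥ v := by
  have hS : Sigk a (x 1) (x 2) = (x 1 ^ 2 + κ) - (κ - a ^ 2 * cos (x 2) ^ 2) := by
    rw [Sigk]
    ring
  obtain rfl : p = q * (x 1 ^ 2 + κ) / (κ - a ^ 2 * cos (x 2) ^ 2) := by
    rw [← hpq, mul_div_cancel_right₀ _ hA]
  simp only [piomkRate, marckRate]
  generalize κ - a ^ 2 * cos (x 2) ^ 2 = A at *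
  generalize x 1 ^ 2 + κ = B at *
  have hv : A * (v 0 ^ 2 - v 1 ^ 2) = Delk M a (x 1) * B * (v 2 ^ 2 + v 3 ^ 2) := by
    rw [hv₀₁, hv₂₃]
    ring
  ext i
  fin_cases i <;>
    simp [frameCovDeriv, hodgeKillingYano, blockSkew, blockScale, carterConnection, mulVec,
      dotProduct, Fin.sum_univ_four] <;>
    field_simp <;> rw [hS]
  · ring
  · linear_combination q * (B - A) * x 1 * Delk M a (x 1) * hv
  · ring
  · linear_combination q * (B - A) * a ^ 2 * cos (x 2) * sin (x 2) * hv

lemma frameCovDeriv_blockScale_mul_hodgeKillingYano_mulVec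
    (hSig : Sigk a (x 1) (x 2) ≠ 0) (hΔ : Delk M a (x 1) ≠ 0)
    (hA : κ - a ^ 2 * cos (x 2) ^ 2 ≠ 0) (hB : x 1 ^ 2 + κ ≠ 0)
    (hpq : p * (κ - a ^ 2 * cos (x 2) ^ 2) = q * (x 1 ^ 2 + κ))
    (hv₀₁ : v 0 ^ 2 - v 1 ^ 2 = Delk M a (x 1) * (x 1 ^ 2 + κ))
    (hv₂₃ : v 2 ^ 2 + v 3 ^ 2 = κ - a ^ 2 * cos (x 2) ^ 2) :
    frameCovDeriv (carterConnection M a x v)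
        (blockScale (q * piomkRate a κ x v) (-(p * piomkRate a κ x v)) *
            hodgeKillingYano a x +
          blockScale q p *
            blockSkew (v 1 / Sigk a (x 1) (x 2)) (a * sin (x 2) * (v 3 / Sigk a (x 1) (x 2))))
        (blockScale q p * hodgeKillingYano a x) *ᵥ v =
      (κ * marckRate a κ x v) • blockScale q p *ᵥ v := by
  have hS : Sigk a (x 1) (x 2) = (x 1 ^ 2 + κ) - (κ - a ^ 2 * cos (x 2) ^ 2) := by
    rw [Sigk]
    ring
  obtain rfl : p = q * (x 1 ^ 2 + κ) / (κ - a ^ 2 * cos (x 2) ^ 2) := by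
    rw [← hpq, mul_div_cancel_right₀ _ hA]
  simp only [piomkRate, marckRate]
  generalize hAeq : κ - a ^ 2 * cos (x 2) ^ 2 = A at *
  generalize hBeq : x 1 ^ 2 + κ = B at *
  have hv : A * (v 0 ^ 2 - v 1 ^ 2) = Delk M a (x 1) * B * (v 2 ^ 2 + v 3 ^ 2) := by
    rw [hv₀₁, hv₂₃]
    ring
  ext i
  fin_cases i <;>
    simp [frameCovDeriv, hodgeKillingYano, blockSkew, blockScale, carterConnection, mulVec,
      dotProduct, Fin.sum_univ_four] <;>
    field_simp <;> rw [hS, ← hAeq, ← hBeq] <;> rw [← hAeq, ← hBeq] at hv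
  · linear_combination (-q * Delk M a (x 1) * κ * (x 1 ^ 2 + a ^ 2 * cos (x 2) ^ 2)) * hv
  · ring
  · linear_combination (-q * a * sin (x 2) * κ * (x 1 ^ 2 + a ^ 2 * cos (x 2) ^ 2)) * hv
  · ring

end CovariantDerivative

section FrameFields

lemma hasDerivAt_blockSkew {α β : ℝ → ℝ} {α' β' τ : ℝ} (hα : HasDerivAt α α' τ)
    (hβ : HasDerivAt β β' τ) (i j : Fin 4) :
    HasDerivAt (fun t => blockSkew (α t) (β t) i j) (blockSkew α' β' i j) τ := by
  fin_cases i <;> fin_cases j <;> first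
    | exact hasDerivAt_const _ _
    | exact hα
    | exact hβ
    | exact hβ.neg

lemma hasDerivAt_blockScale {q p : ℝ → ℝ} {q' p' τ : ℝ} (hq : HasDerivAt q q' τ)
    (hp : HasDerivAt p p' τ) (i j : Fin 4) :
    HasDerivAt (fun t => blockScale (q t) (p t) i j) (blockScale q' p' i j) τ := by
  fin_cases i <;> fin_cases j <;> first
    | exact hasDerivAt_const _ _
    | exact hq
    | exact hp

variable {M a κ : ℝ} {x : ℝ → Fin 4 → ℝ} {V : Fin 4 → ℝ} {τ : ℝ}

lemma hasDerivAt_r (hx : HasDerivAt x V τ) (hSig : Sigk a (x τ 1) (x τ 2) ≠ 0) :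
    HasDerivAt (fun t => x t 1)
      ((carterCoframe M a (x τ) *ᵥ V) 1 / Sigk a (x τ 1) (x τ 2)) τ := by
  refine (hasDerivAt_pi.1 hx 1).congr_deriv ?_
  simp [carterCoframe, mulVec, dotProduct, Fin.sum_univ_four, hSig]

lemma hasDerivAt_ϑ (hx : HasDerivAt x V τ) (hSig : Sigk a (x τ 1) (x τ 2) ≠ 0) :
    HasDerivAt (fun t => x t 2)
      ((carterCoframe M a (x τ) *ᵥ V) 3 / Sigk a (x τ 1) (x τ 2)) τ := by
  refine (hasDerivAt_pi.1 hx 2).congr_deriv ?_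
  simp [carterCoframe, mulVec, dotProduct, Fin.sum_univ_four, hSig]

lemma carter_pos {ϑ : ℝ} (hκ : a ^ 2 * cos ϑ ^ 2 < κ) : 0 < κ :=
  (by positivity : 0 ≤ a ^ 2 * cos ϑ ^ 2).trans_lt hκ

lemma sq_add_carter_pos {r ϑ : ℝ} (hκ : a ^ 2 * cos ϑ ^ 2 < κ) : 0 < r ^ 2 + κ :=
  add_pos_of_nonneg_of_pos (sq_nonneg r) (carter_pos hκ)

lemma piomk_pos {r ϑ : ℝ} (hκ : a ^ 2 * cos ϑ ^ 2 < κ) : 0 < piomk a κ r ϑ :=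
  div_pos (sub_pos.2 hκ) (sq_add_carter_pos hκ)

lemma hasDerivAt_sqrt_piomk (hx : HasDerivAt x V τ) (hSig : Sigk a (x τ 1) (x τ 2) ≠ 0)
    (hκ : a ^ 2 * cos (x τ 2) ^ 2 < κ) :
    HasDerivAt (fun t => √(piomk a κ (x t 1) (x t 2)))
      (√(piomk a κ (x τ 1) (x τ 2)) * piomkRate a κ (x τ) (carterCoframe M a (x τ) *ᵥ V)) τ := by
  have hr := hasDerivAt_r (M := M) hx hSig
  have hϑ := hasDerivAt_ϑ (M := M) hx hSig
  have hA : κ - a ^ 2 * cos (x τ 2) ^ 2 ≠ 0 := (sub_pos.2 hκ).ne'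
  have hB : x τ 1 ^ 2 + κ ≠ 0 := (sq_add_carter_pos hκ).ne'
  have hϖ_pos : 0 < piomk a κ (x τ 1) (x τ 2) := piomk_pos hκ
  have hϖ : HasDerivAt (fun t => piomk a κ (x t 1) (x t 2)) (2 * piomk a κ (x τ 1) (x τ 2) *
      piomkRate a κ (x τ) (carterCoframe M a (x τ) *ᵥ V)) τ := by
    refine ((((hϑ.cos.pow 2).const_mul (a ^ 2)).const_sub κ).div ((hr.pow 2).add_const κ)
      hB).congr_deriv ?_
    simp only [piomk, piomkRate, Pi.pow_apply]
    field_simp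
    ring
  refine (hϖ.sqrt hϖ_pos.ne').congr_deriv ?_
  rw [mul_assoc, mul_div_mul_left _ _ two_ne_zero, mul_div_right_comm, div_sqrt]

end FrameFields

/-- Marck's scaling, by `√ϖ` in the `e₀, e₁` plane and by `1/√ϖ` in the `e₂, e₃` plane. -/
def marckScale (a κ : ℝ) (x : Fin 4 → ℝ) : Matrix (Fin 4) (Fin 4) ℝ :=
  blockScale (√(piomk a κ (x 1) (x 2))) (√(piomk a κ (x 1) (x 2)))⁻¹

/-- The `carterFrame` components of `L̃₁`, for the tangent vector with components `v`. -/
def marckFst (a κ : ℝ) (x v : Fin 4 → ℝ) : Fin 4 → ℝ :=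
  (√κ)⁻¹ • (marckScale a κ x * hodgeKillingYano a x) *ᵥ v

/-- The `carterFrame` components of `L̃₂`, for the tangent vector with components `v`. -/
def marckSnd (a κ : ℝ) (x v : Fin 4 → ℝ) : Fin 4 → ℝ :=
  marckScale a κ x *ᵥ v

/-- The `carterFrame` components of `L₃`, for the tangent vector with components `v`. -/
def marckThd (a κ : ℝ) (x v : Fin 4 → ℝ) : Fin 4 → ℝ :=
  (√κ)⁻¹ • killingYano a x *ᵥ v

section MovingFrame

variable {M a κ : ℝ} {x u : ℝ → Fin 4 → ℝ} {V : Fin 4 → ℝ} {τ : ℝ}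

lemma hasDerivAt_killingYano (hx : HasDerivAt x V τ)
    (hSig : Sigk a (x τ 1) (x τ 2) ≠ 0) (hV : carterCoframe M a (x τ) *ᵥ V = u τ) (i j : Fin 4) :
    HasDerivAt (fun t => killingYano a (x t) i j)
      (blockSkew (-(a * sin (x τ 2) * (u τ 3 / Sigk a (x τ 1) (x τ 2))))
        (u τ 1 / Sigk a (x τ 1) (x τ 2)) i j) τ := by
  have hr := hasDerivAt_r (M := M) hx hSig
  have hac := (hasDerivAt_ϑ (M := M) hx hSig).cos.const_mul a
  rw [hV] at hr hac
  exact hasDerivAt_blockSkew (hac.congr_deriv (by ring)) hr i j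

lemma hasDerivAt_marckThd (hx : HasDerivAt x V τ)
    (hSig : Sigk a (x τ 1) (x τ 2) ≠ 0) (hΔ : Delk M a (x τ 1) ≠ 0)
    (hV : carterCoframe M a (x τ) *ᵥ V = u τ)
    (hu : HasDerivAt u (-(carterConnection M a (x τ) (u τ) *ᵥ u τ)) τ) :
    HasDerivAt (fun t => marckThd a κ (x t) (u t))
      (-(carterConnection M a (x τ) (u τ) *ᵥ marckThd a κ (x τ) (u τ))) τ := by
  have hK := hasDerivAt_mulVec_of_hasDerivAt_neg (hasDerivAt_killingYano hx hSig hV) hu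
  rw [frameCovDeriv_killingYano_mulVec hSig hΔ, zero_sub] at hK
  refine (hK.const_smul (√κ)⁻¹).congr_deriv ?_
  rw [marckThd, mulVec_smul, smul_neg]

lemma hasDerivAt_hodgeKillingYano (hx : HasDerivAt x V τ)
    (hSig : Sigk a (x τ 1) (x τ 2) ≠ 0) (hV : carterCoframe M a (x τ) *ᵥ V = u τ) (i j : Fin 4) :
    HasDerivAt (fun t => hodgeKillingYano a (x t) i j)
      (blockSkew (u τ 1 / Sigk a (x τ 1) (x τ 2))
        (a * sin (x τ 2) * (u τ 3 / Sigk a (x τ 1) (x τ 2))) i j) τ := by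
  have hr := hasDerivAt_r (M := M) hx hSig
  have hac := ((hasDerivAt_ϑ (M := M) hx hSig).cos.const_mul a).neg
  rw [hV] at hr hac
  exact hasDerivAt_blockSkew hr (hac.congr_deriv (by ring)) i j

lemma hasDerivAt_marckScale (hx : HasDerivAt x V τ) (hSig : Sigk a (x τ 1) (x τ 2) ≠ 0)
    (hκ : a ^ 2 * cos (x τ 2) ^ 2 < κ)
    (hV : carterCoframe M a (x τ) *ᵥ V = u τ) (i j : Fin 4) :
    HasDerivAt (fun t => marckScale a κ (x t) i j)
      (blockScale (√(piomk a κ (x τ 1) (x τ 2)) * piomkRate a κ (x τ) (u τ))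
        (-((√(piomk a κ (x τ 1) (x τ 2)))⁻¹ * piomkRate a κ (x τ) (u τ))) i j) τ := by
  have hq_ne : √(piomk a κ (x τ 1) (x τ 2)) ≠ 0 := (sqrt_pos.2 (piomk_pos hκ)).ne'
  have hq := hasDerivAt_sqrt_piomk (M := M) hx hSig hκ
  rw [hV] at hq
  refine hasDerivAt_blockScale hq ((hq.inv hq_ne).congr_deriv ?_) i j
  field_simp

lemma inv_sqrt_piomk_mul {r ϑ : ℝ} (hκ : a ^ 2 * cos ϑ ^ 2 < κ) :
    (√(piomk a κ r ϑ))⁻¹ * (κ - a ^ 2 * cos ϑ ^ 2) = √(piomk a κ r ϑ) * (r ^ 2 + κ) := by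
  have hϖ : 0 < piomk a κ r ϑ := piomk_pos hκ
  rw [inv_mul_eq_iff_eq_mul₀ (sqrt_pos.2 hϖ).ne', ← mul_assoc, mul_self_sqrt hϖ.le, piomk,
    div_mul_cancel₀ _ (sq_add_carter_pos hκ).ne']

lemma hasDerivAt_marckSnd (hx : HasDerivAt x V τ)
    (hSig : Sigk a (x τ 1) (x τ 2) ≠ 0) (hΔ : Delk M a (x τ 1) ≠ 0)
    (hκ : a ^ 2 * cos (x τ 2) ^ 2 < κ) (hV : carterCoframe M a (x τ) *ᵥ V = u τ)
    (hu₀₁ : u τ 0 ^ 2 - u τ 1 ^ 2 = Delk M a (x τ 1) * (x τ 1 ^ 2 + κ))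
    (hu₂₃ : u τ 2 ^ 2 + u τ 3 ^ 2 = κ - a ^ 2 * cos (x τ 2) ^ 2)
    (hu : HasDerivAt u (-(carterConnection M a (x τ) (u τ) *ᵥ u τ)) τ) :
    HasDerivAt (fun t => marckSnd a κ (x t) (u t))
      (-(√κ * marckRate a κ (x τ) (u τ)) • marckFst a κ (x τ) (u τ) -
        carterConnection M a (x τ) (u τ) *ᵥ marckSnd a κ (x τ) (u τ)) τ := by
  have hN := hasDerivAt_mulVec_of_hasDerivAt_neg (hasDerivAt_marckScale hx hSig hκ hV) hu
  refine hN.congr_deriv (congrArg (· - _) ?_)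
  refine (frameCovDeriv_blockScale_mulVec hSig hΔ (sub_pos.2 hκ).ne' (sq_add_carter_pos hκ).ne'
    (inv_sqrt_piomk_mul hκ) hu₀₁ hu₂₃).trans ?_
  have hsqrt : √κ ≠ 0 := (sqrt_pos.2 (carter_pos hκ)).ne'
  rw [marckFst, smul_smul, neg_mul, mul_right_comm, mul_inv_cancel₀ hsqrt, one_mul]
  rfl

lemma hasDerivAt_marckFst (hx : HasDerivAt x V τ)
    (hSig : Sigk a (x τ 1) (x τ 2) ≠ 0) (hΔ : Delk M a (x τ 1) ≠ 0)
    (hκ : a ^ 2 * cos (x τ 2) ^ 2 < κ) (hV : carterCoframe M a (x τ) *ᵥ V = u τ)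
    (hu₀₁ : u τ 0 ^ 2 - u τ 1 ^ 2 = Delk M a (x τ 1) * (x τ 1 ^ 2 + κ))
    (hu₂₃ : u τ 2 ^ 2 + u τ 3 ^ 2 = κ - a ^ 2 * cos (x τ 2) ^ 2)
    (hu : HasDerivAt u (-(carterConnection M a (x τ) (u τ) *ᵥ u τ)) τ) :
    HasDerivAt (fun t => marckFst a κ (x t) (u t))
      ((√κ * marckRate a κ (x τ) (u τ)) • marckSnd a κ (x τ) (u τ) -
        carterConnection M a (x τ) (u τ) *ᵥ marckFst a κ (x τ) (u τ)) τ := by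
  have hNK := hasDerivAt_mulVec_of_hasDerivAt_neg (hasDerivAt_matrix_mul
    (hasDerivAt_marckScale hx hSig hκ hV) (hasDerivAt_hodgeKillingYano hx hSig hV)) hu
  refine (hNK.const_smul (√κ)⁻¹).congr_deriv ?_
  rw [smul_sub, marckFst, mulVec_smul]
  refine congrArg (· - _) ?_
  refine (congrArg ((√κ)⁻¹ • ·) (frameCovDeriv_blockScale_mul_hodgeKillingYano_mulVec hSig hΔ
    (sub_pos.2 hκ).ne' (sq_add_carter_pos hκ).ne' (inv_sqrt_piomk_mul hκ) hu₀₁ hu₂₃)).trans ?_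
  have hsqrt : (√κ)⁻¹ * κ = √κ := by rw [inv_mul_eq_div, div_sqrt]
  rw [smul_smul, ← mul_assoc, hsqrt]
  rfl

end MovingFrame

/-- The `carterFrame` components of the velocity of a geodesic with first integrals
`E`, `Φ`, `κ`. -/
def geodesicComponents (M a E Φ κ : ℝ) (x : Fin 4 → ℝ) : Fin 4 → ℝ :=
  ![Pk a E Φ (x 1), √(Rk M a E Φ κ (x 1)), Dk a E Φ (x 2), √(Thk a E Φ κ (x 2))]

section Components

variable {M a E Φ κ : ℝ} {x : Fin 4 → ℝ}

lemma carterCoframe_mulVec_velocity {V : Fin 4 → ℝ} (hSig : Sigk a (x 1) (x 2) ≠ 0)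
    (hΔ : Delk M a (x 1) ≠ 0) (hsin : sin (x 2) ≠ 0)
    (ht : V 0 = (((x 1 ^ 2 + a ^ 2) ^ 2 - a ^ 2 * Delk M a (x 1) * sin (x 2) ^ 2) * E
      - 2 * M * a * x 1 * Φ) / (Sigk a (x 1) (x 2) * Delk M a (x 1)))
    (hφ : V 3 = (2 * M * a * x 1 * E
      + (Delk M a (x 1) - a ^ 2 * sin (x 2) ^ 2) / sin (x 2) ^ 2 * Φ)
        / (Sigk a (x 1) (x 2) * Delk M a (x 1)))
    (hr : V 1 = √(Rk M a E Φ κ (x 1)) / Sigk a (x 1) (x 2))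
    (hϑ : V 2 = √(Thk a E Φ κ (x 2)) / Sigk a (x 1) (x 2)) :
    carterCoframe M a x *ᵥ V = geodesicComponents M a E Φ κ x := by
  have hS := Sigk_eq_sub_sin (a := a) (x 1) (x 2)
  have hMr : 2 * M * x 1 = x 1 ^ 2 + a ^ 2 - Delk M a (x 1) := by
    rw [Delk]
    ring
  ext i
  fin_cases i <;>
    simp [carterCoframe, geodesicComponents, mulVec, dotProduct, Fin.sum_univ_four, ht, hφ, hr,
      hϑ, Pk, Dk] <;> field_simp <;> rw [hS]
  · linear_combination (-a * Φ - a ^ 2 * sin (x 2) ^ 2 * E) * hMr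
  · linear_combination (-a ^ 2 * sin (x 2) ^ 2 * Φ -
      a * sin (x 2) ^ 2 * (x 1 ^ 2 + a ^ 2) * E) * hMr

lemma geodesicComponents_sq_sub_sq (hR : 0 ≤ Rk M a E Φ κ (x 1)) :
    geodesicComponents M a E Φ κ x 0 ^ 2 - geodesicComponents M a E Φ κ x 1 ^ 2 =
      Delk M a (x 1) * (x 1 ^ 2 + κ) := by
  simp only [geodesicComponents, cons_val_zero, cons_val_one, sq_sqrt hR]
  rw [Rk]
  ring

lemma geodesicComponents_sq_add_sq (hΘ : 0 ≤ Thk a E Φ κ (x 2)) :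
    geodesicComponents M a E Φ κ x 2 ^ 2 + geodesicComponents M a E Φ κ x 3 ^ 2 =
      κ - a ^ 2 * cos (x 2) ^ 2 := by
  simp only [geodesicComponents, cons_val, sq_sqrt hΘ]
  rw [Thk]
  ring

lemma sqrt_mul_marckRate_geodesicComponents :
    √κ * marckRate a κ x (geodesicComponents M a E Φ κ x) =
      √κ / Sigk a (x 1) (x 2) * (Pk a E Φ (x 1) / (x 1 ^ 2 + κ) -
        a * sin (x 2) * Dk a E Φ (x 2) / (κ - a ^ 2 * cos (x 2) ^ 2)) := by
  simp only [marckRate, geodesicComponents, cons_val_zero, cons_val]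
  ring

lemma carterCoframe_mulVec_symmetricFrame (hSig : 0 < Sigk a (x 1) (x 2))
    (hΔ : 0 < Delk M a (x 1)) (hsin : sin (x 2) ≠ 0) (c₀ c₁ c₂ c₃ : ℝ) :
    carterCoframe M a x *ᵥ (c₀ • e0 M a (x 1) (x 2) + c₁ • e1 M a (x 1) (x 2) +
        c₂ • e2 a (x 1) (x 2) + c₃ • e3 a (x 1) (x 2)) =
      √(Sigk a (x 1) (x 2)) • ![√(Delk M a (x 1)) * c₀, √(Delk M a (x 1)) * c₁, c₂, c₃] := by
  have hS := Sigk_eq_sub_sin (a := a) (x 1) (x 2)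
  have hsqSig := sq_sqrt hSig.le
  have hsqΔ := sq_sqrt hΔ.le
  have hsSig := (sqrt_pos.2 hSig).ne'
  have hsΔ := (sqrt_pos.2 hΔ).ne'
  simp only [e0, e1, e2, e3, sqrt_mul hSig.le, sqrt_div hΔ.le]
  ext i
  fin_cases i <;>
    simp [carterCoframe, mulVec, dotProduct, Fin.sum_univ_four] <;>
    field_simp
  all_goals
    simp only [hsqSig, hsqΔ]
    rw [hS]
    ring

lemma one_div_sqrt_mul_Sigk_mul_sqrt (hSig : 0 < Sigk a (x 1) (x 2)) :
    1 / √(κ * Sigk a (x 1) (x 2)) * √(Sigk a (x 1) (x 2)) = (√κ)⁻¹ := by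
  rw [sqrt_mul' _ hSig.le, one_div, mul_inv, mul_assoc,
    inv_mul_cancel₀ (sqrt_pos.2 hSig).ne', mul_one]

lemma carterCoframe_mulVec_L3vec {x : ℝ → Fin 4 → ℝ} {t : ℝ} (hSig : 0 < Sigk a (x t 1) (x t 2))
    (hΔ : 0 < Delk M a (x t 1)) (hsin : sin (x t 2) ≠ 0) :
    carterCoframe M a (x t) *ᵥ L3vec M a E Φ κ x t =
      marckThd a κ (x t) (geodesicComponents M a E Φ κ (x t)) := by
  have hsΔ := (sqrt_pos.2 hΔ).ne'
  rw [L3vec, sub_eq_add_neg, ← neg_smul, mulVec_smul,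
    carterCoframe_mulVec_symmetricFrame hSig hΔ hsin, smul_smul,
    one_div_sqrt_mul_Sigk_mul_sqrt hSig, marckThd]
  congr 1
  ext i
  fin_cases i <;>
    simp [killingYano, blockSkew, geodesicComponents, mulVec, dotProduct, Fin.sum_univ_four]
    <;> field_simp

lemma carterCoframe_mulVec_Lt1vec {x : ℝ → Fin 4 → ℝ} {t : ℝ} (hSig : 0 < Sigk a (x t 1) (x t 2))
    (hΔ : 0 < Delk M a (x t 1)) (hsin : sin (x t 2) ≠ 0) :
    carterCoframe M a (x t) *ᵥ Lt1vec M a E Φ κ x t =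
      marckFst a κ (x t) (geodesicComponents M a E Φ κ (x t)) := by
  have hsΔ := (sqrt_pos.2 hΔ).ne'
  rw [Lt1vec, sub_eq_add_neg, ← neg_smul, mulVec_smul,
    carterCoframe_mulVec_symmetricFrame hSig hΔ hsin, smul_smul,
    one_div_sqrt_mul_Sigk_mul_sqrt hSig, marckFst]
  congr 1
  ext i
  fin_cases i <;>
    simp [marckScale, hodgeKillingYano, blockScale, blockSkew, geodesicComponents, mulVec,
      dotProduct, Fin.sum_univ_four, div_eq_inv_mul] <;> field_simp

lemma carterCoframe_mulVec_Lt2vec {x : ℝ → Fin 4 → ℝ} {t : ℝ} (hSig : 0 < Sigk a (x t 1) (x t 2))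
    (hΔ : 0 < Delk M a (x t 1)) (hsin : sin (x t 2) ≠ 0) :
    carterCoframe M a (x t) *ᵥ Lt2vec M a E Φ κ x t =
      marckSnd a κ (x t) (geodesicComponents M a E Φ κ (x t)) := by
  have hsΔ := (sqrt_pos.2 hΔ).ne'
  rw [Lt2vec, mulVec_smul, carterCoframe_mulVec_symmetricFrame hSig hΔ hsin, smul_smul,
    one_div_mul_cancel (sqrt_pos.2 hSig).ne', one_smul, marckSnd]
  ext i
  fin_cases i <;>
    simp [marckScale, blockScale, geodesicComponents, mulVec, dotProduct, Fin.sum_univ_four]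
    <;> field_simp

end Components

section MarckFrame

variable {M a E Φ κ : ℝ} {x : ℝ → Fin 4 → ℝ} {V : Fin 4 → ℝ} {τ : ℝ}

lemma parallelAt_of_hasDerivAt_components {L m : ℝ → Fin 4 → ℝ} (hx : HasDerivAt x V τ)
    (hSig : 0 < Sigk a (x τ 1) (x τ 2)) (hΔ : 0 < Delk M a (x τ 1)) (hsin : sin (x τ 2) ≠ 0)
    (hL : ∀ {t}, 0 < Sigk a (x t 1) (x t 2) → 0 < Delk M a (x t 1) → sin (x t 2) ≠ 0 →
      carterCoframe M a (x t) *ᵥ L t = m t)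
    (hm : HasDerivAt m
      (-(carterConnection M a (x τ) (carterCoframe M a (x τ) *ᵥ V) *ᵥ m τ)) τ) :
    ParallelAt M a x L τ := by
  have hLm : (fun t => carterCoframe M a (x t) *ᵥ L t) =ᶠ[𝓝 τ] m := by
    filter_upwards [(hasDerivAt_Sigk hx).continuousAt.eventually (lt_mem_nhds hSig),
      (hasDerivAt_Delk hx).continuousAt.eventually (lt_mem_nhds hΔ),
      (hasDerivAt_pi.1 hx 2).sin.continuousAt.eventually_ne hsin] with t hSigt hΔt hsint
    exact hL hSigt hΔt hsint
  apply parallelAt_of_hasDerivAt_carterCoframe hx hSig.ne' hΔ.ne' hsin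
  rw [hL hSig hΔ hsin]
  exact hm.congr_of_eventuallyEq hLm

lemma parallelAt_L3vec (hx : HasDerivAt x V τ) (hSig : 0 < Sigk a (x τ 1) (x τ 2))
    (hΔ : 0 < Delk M a (x τ 1)) (hsin : sin (x τ 2) ≠ 0)
    (hV : carterCoframe M a (x τ) *ᵥ V = geodesicComponents M a E Φ κ (x τ))
    (hu : HasDerivAt (fun t => geodesicComponents M a E Φ κ (x t))
      (-(carterConnection M a (x τ) (geodesicComponents M a E Φ κ (x τ)) *ᵥ
        geodesicComponents M a E Φ κ (x τ))) τ) :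
    ParallelAt M a x (L3vec M a E Φ κ x) τ := by
  refine parallelAt_of_hasDerivAt_components hx hSig hΔ hsin carterCoframe_mulVec_L3vec ?_
  rw [hV]
  exact hasDerivAt_marckThd hx hSig.ne' hΔ.ne' hV hu

lemma parallelAt_L1vec {φ : ℝ → ℝ} (hx : HasDerivAt x V τ)
    (hSig : 0 < Sigk a (x τ 1) (x τ 2)) (hΔ : 0 < Delk M a (x τ 1)) (hsin : sin (x τ 2) ≠ 0)
    (hκ : a ^ 2 * cos (x τ 2) ^ 2 < κ) (hR : 0 ≤ Rk M a E Φ κ (x τ 1))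
    (hΘ : 0 ≤ Thk a E Φ κ (x τ 2))
    (hV : carterCoframe M a (x τ) *ᵥ V = geodesicComponents M a E Φ κ (x τ))
    (hu : HasDerivAt (fun t => geodesicComponents M a E Φ κ (x t))
      (-(carterConnection M a (x τ) (geodesicComponents M a E Φ κ (x τ)) *ᵥ
        geodesicComponents M a E Φ κ (x τ))) τ)
    (hφ : HasDerivAt φ (√κ * marckRate a κ (x τ) (geodesicComponents M a E Φ κ (x τ))) τ) :
    ParallelAt M a x (L1vec M a E Φ κ x φ) τ := by
  have hu₀₁ := geodesicComponents_sq_sub_sq hR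
  have hu₂₃ := geodesicComponents_sq_add_sq (M := M) hΘ
  refine parallelAt_of_hasDerivAt_components hx hSig hΔ hsin (fun hSigt hΔt hsint => ?_) <|
    hasDerivAt_cos_smul_sub_sin_smul (A := mulVecLin _) hφ
      ((hasDerivAt_marckFst hx hSig.ne' hΔ.ne' hκ hV hu₀₁ hu₂₃ hu).congr_deriv (by rw [hV]; rfl))
      ((hasDerivAt_marckSnd hx hSig.ne' hΔ.ne' hκ hV hu₀₁ hu₂₃ hu).congr_deriv (by rw [hV]; rfl))
  rw [L1vec, mulVec_sub, mulVec_smul, mulVec_smul, carterCoframe_mulVec_Lt1vec hSigt hΔt hsint,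
    carterCoframe_mulVec_Lt2vec hSigt hΔt hsint]

lemma parallelAt_L2vec {φ : ℝ → ℝ} (hx : HasDerivAt x V τ)
    (hSig : 0 < Sigk a (x τ 1) (x τ 2)) (hΔ : 0 < Delk M a (x τ 1)) (hsin : sin (x τ 2) ≠ 0)
    (hκ : a ^ 2 * cos (x τ 2) ^ 2 < κ) (hR : 0 ≤ Rk M a E Φ κ (x τ 1))
    (hΘ : 0 ≤ Thk a E Φ κ (x τ 2))
    (hV : carterCoframe M a (x τ) *ᵥ V = geodesicComponents M a E Φ κ (x τ))
    (hu : HasDerivAt (fun t => geodesicComponents M a E Φ κ (x t))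
      (-(carterConnection M a (x τ) (geodesicComponents M a E Φ κ (x τ)) *ᵥ
        geodesicComponents M a E Φ κ (x τ))) τ)
    (hφ : HasDerivAt φ (√κ * marckRate a κ (x τ) (geodesicComponents M a E Φ κ (x τ))) τ) :
    ParallelAt M a x (L2vec M a E Φ κ x φ) τ := by
  have hu₀₁ := geodesicComponents_sq_sub_sq hR
  have hu₂₃ := geodesicComponents_sq_add_sq (M := M) hΘ
  refine parallelAt_of_hasDerivAt_components hx hSig hΔ hsin (fun hSigt hΔt hsint => ?_) <|
    hasDerivAt_sin_smul_add_cos_smul (A := mulVecLin _) hφ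
      ((hasDerivAt_marckFst hx hSig.ne' hΔ.ne' hκ hV hu₀₁ hu₂₃ hu).congr_deriv (by rw [hV]; rfl))
      ((hasDerivAt_marckSnd hx hSig.ne' hΔ.ne' hκ hV hu₀₁ hu₂₃ hu).congr_deriv (by rw [hV]; rfl))
  rw [L2vec, mulVec_add, mulVec_smul, mulVec_smul, carterCoframe_mulVec_Lt1vec hSigt hΔt hsint,
    carterCoframe_mulVec_Lt2vec hSigt hΔt hsint]

lemma hasDerivAt_L0vec (hx : DifferentiableAt ℝ x τ) : HasDerivAt x (L0vec x τ) τ :=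
  hasDerivAt_pi.2 fun i => (differentiableAt_pi.1 hx i).hasDerivAt

lemma hasDerivAt_geodesicComponents (hx : DifferentiableAt ℝ x τ)
    (hL₀ : DifferentiableAt ℝ (L0vec x) τ)
    (hSig : Sigk a (x τ 1) (x τ 2) ≠ 0) (hΔ : Delk M a (x τ 1) ≠ 0) (hsin : sin (x τ 2) ≠ 0)
    (hV : ∀ᶠ t in 𝓝 τ,
      carterCoframe M a (x t) *ᵥ L0vec x t = geodesicComponents M a E Φ κ (x t))
    (hgeo : ParallelAt M a x (L0vec x) τ) :
    HasDerivAt (fun t => geodesicComponents M a E Φ κ (x t))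
      (-(carterConnection M a (x τ) (geodesicComponents M a E Φ κ (x τ)) *ᵥ
        geodesicComponents M a E Φ κ (x τ))) τ := by
  have hCL₀ := (parallelAt_iff_hasDerivAt_carterCoframe (hasDerivAt_L0vec hx) hSig hΔ hsin
    hL₀).1 hgeo
  rw [hV.self_of_nhds] at hCL₀
  exact hCL₀.congr_of_eventuallyEq (hV.mono fun t ht => ht.symm)

end MarckFrame

section GeodesicCurve

variable {M a E Φ κ : ℝ}

lemma Sigk_pos_of_ne_zero {r ϑ : ℝ} (h : Sigk a r ϑ ≠ 0) : 0 < Sigk a r ϑ :=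
  lt_of_le_of_ne (by unfold Sigk; positivity) h.symm

lemma Sigk_ne_zero_of_Rk_pos {r ϑ : ℝ} (hsin : sin ϑ ≠ 0) (hR : 0 < Rk M a E Φ κ r)
    (hΘ : 0 ≤ Thk a E Φ κ ϑ) : Sigk a r ϑ ≠ 0 := by
  intro hSig
  have hr : r = 0 := by
    rw [Sigk] at hSig
    nlinarith only [hSig, mul_nonneg (sq_nonneg a) (sq_nonneg (cos ϑ))]
  subst hr
  have hac : a ^ 2 * cos ϑ ^ 2 = 0 := by simpa [Sigk] using hSig
  have hP : Pk a E Φ 0 = a * sin ϑ * Dk a E Φ ϑ := by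
    rw [Pk, Dk]
    field_simp
    linear_combination E * hac - a ^ 2 * E * sin_sq_add_cos_sq ϑ
  have hR_eq : Rk M a E Φ κ 0 = -(a ^ 2 * Thk a E Φ κ ϑ) := by
    rw [Rk, Thk, Delk, hP]
    linear_combination (a ^ 2 * Dk a E Φ ϑ ^ 2) * sin_sq_add_cos_sq ϑ -
      (a ^ 2 + Dk a E Φ ϑ ^ 2) * hac
  linarith [mul_nonneg (sq_nonneg a) hΘ]

lemma differentiableAt_L0vec {I : Set ℝ} {x : ℝ → Fin 4 → ℝ} {τ : ℝ} (hI : IsOpen I)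
    (hx : ContDiffOn ℝ 2 x I) (hτ : τ ∈ I) : DifferentiableAt ℝ (L0vec x) τ :=
  differentiableAt_pi.2 fun i => (((contDiffOn_pi.1 hx i).deriv_of_isOpen (m := 1) hI
    (by norm_num)).differentiableOn one_ne_zero).differentiableAt (hI.mem_nhds hτ)

end GeodesicCurve

theorem marck_parallel_frame_general (M a E Φ κ : ℝ) (I : Set ℝ) (hIopen : IsOpen I)
    (x : ℝ → Fin 4 → ℝ) (hx : ContDiffOn ℝ 2 x I)
    (hSig : ∀ τ ∈ I, Sigk a (x τ 1) (x τ 2) ≠ 0)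
    (hsin : ∀ τ ∈ I, sin (x τ 2) ≠ 0)
    (hΔ : ∀ τ ∈ I, 0 < Delk M a (x τ 1))
    (hR : ∀ τ ∈ I, 0 ≤ Rk M a E Φ κ (x τ 1))
    (hΘ : ∀ τ ∈ I, 0 ≤ Thk a E Φ κ (x τ 2))
    (hκ : ∀ τ ∈ I, a ^ 2 * cos (x τ 2) ^ 2 < κ)
    (hvt : ∀ τ ∈ I, deriv (fun t => x t 0) τ =
      (((x τ 1 ^ 2 + a ^ 2) ^ 2 - a ^ 2 * Delk M a (x τ 1) * sin (x τ 2) ^ 2) * E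
          - 2 * M * a * x τ 1 * Φ)
        / (Sigk a (x τ 1) (x τ 2) * Delk M a (x τ 1)))
    (hvφ : ∀ τ ∈ I, deriv (fun t => x t 3) τ =
      (2 * M * a * x τ 1 * E
          + (Delk M a (x τ 1) - a ^ 2 * sin (x τ 2) ^ 2) / sin (x τ 2) ^ 2 * Φ)
        / (Sigk a (x τ 1) (x τ 2) * Delk M a (x τ 1)))
    (hvr : ∀ τ ∈ I, deriv (fun t => x t 1) τ =
      √(Rk M a E Φ κ (x τ 1)) / Sigk a (x τ 1) (x τ 2))
    (hvϑ : ∀ τ ∈ I, deriv (fun t => x t 2) τ =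
      √(Thk a E Φ κ (x τ 2)) / Sigk a (x τ 1) (x τ 2))
    (hgeo : ∀ τ ∈ I, ∀ i, deriv (deriv (fun t => x t i)) τ
      + ∑ j, ∑ k, kerrChristoffel M a i j k (x τ)
          * deriv (fun t => x t j) τ * deriv (fun t => x t k) τ = 0)
    (Φhat : ℝ → ℝ)
    (hΦhat : ∀ τ ∈ I, HasDerivAt Φhat
      (√κ / Sigk a (x τ 1) (x τ 2) * (Pk a E Φ (x τ 1) / (x τ 1 ^ 2 + κ)
        - a * sin (x τ 2) * Dk a E Φ (x τ 2) / (κ - a ^ 2 * cos (x τ 2) ^ 2))) τ) :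
    ∀ τ ∈ I,
      ParallelAt M a x (L0vec x) τ ∧
      ParallelAt M a x (L1vec M a E Φ κ x Φhat) τ ∧
      ParallelAt M a x (L2vec M a E Φ κ x Φhat) τ ∧
      ParallelAt M a x (L3vec M a E Φ κ x) τ := by
  intro τ hτ
  have hxτ : DifferentiableAt ℝ x τ :=
    (hx.differentiableOn two_ne_zero).differentiableAt (hIopen.mem_nhds hτ)
  have hV (t : ℝ) (ht : t ∈ I) :
      carterCoframe M a (x t) *ᵥ L0vec x t = geodesicComponents M a E Φ κ (x t) :=
    carterCoframe_mulVec_velocity (hSig t ht) (hΔ t ht).ne' (hsin t ht) (hvt t ht) (hvφ t ht)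
      (hvr t ht) (hvϑ t ht)
  have hu := hasDerivAt_geodesicComponents hxτ (differentiableAt_L0vec hIopen hx hτ) (hSig τ hτ)
    (hΔ τ hτ).ne' (hsin τ hτ) (eventually_of_mem (hIopen.mem_nhds hτ) hV) (hgeo τ hτ)
  have hx' := hasDerivAt_L0vec hxτ
  have hSigτ := Sigk_pos_of_ne_zero (hSig τ hτ)
  have hφ := (hΦhat τ hτ).congr_deriv (sqrt_mul_marckRate_geodesicComponents (M := M)).symm
  exact ⟨hgeo τ hτ,
    parallelAt_L1vec hx' hSigτ (hΔ τ hτ) (hsin τ hτ) (hκ τ hτ) (hR τ hτ) (hΘ τ hτ) (hV τ hτ) hu hφ,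
    parallelAt_L2vec hx' hSigτ (hΔ τ hτ) (hsin τ hτ) (hκ τ hτ) (hR τ hτ) (hΘ τ hτ) (hV τ hτ) hu hφ,
    parallelAt_L3vec hx' hSigτ (hΔ τ hτ) (hsin τ hτ) (hV τ hτ) hu⟩

open Real in
/-- Marck's theorem: the frame (L₀, L₁, L₂, L₃) is parallel propagated along
any timelike Kerr geodesic with first integrals E, Φ, κ. -/
theorem marck_parallel_frame
    (M a E Φ κ : ℝ) (ha : 0 ≤ a) (haM : a < M)
    (I : Set ℝ) (hIopen : IsOpen I) (hIconn : Set.OrdConnected I)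
    (x : ℝ → Fin 4 → ℝ) (hx : ContDiffOn ℝ 2 x I)
    (hsin : ∀ τ ∈ I, 0 < Real.sin (x τ 2))
    (hΔ : ∀ τ ∈ I, 0 < Delk M a (x τ 1))
    (hR : ∀ τ ∈ I, 0 < Rk M a E Φ κ (x τ 1))
    (hΘ : ∀ τ ∈ I, 0 < Thk a E Φ κ (x τ 2))
    (hκ : ∀ τ ∈ I, a ^ 2 * Real.cos (x τ 2) ^ 2 < κ)
    (hvt : ∀ τ ∈ I, deriv (fun t => x t 0) τ =
      (((x τ 1 ^ 2 + a ^ 2) ^ 2 - a ^ 2 * Delk M a (x τ 1) * sin (x τ 2) ^ 2) * E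
          - 2 * M * a * x τ 1 * Φ)
        / (Sigk a (x τ 1) (x τ 2) * Delk M a (x τ 1)))
    (hvφ : ∀ τ ∈ I, deriv (fun t => x t 3) τ =
      (2 * M * a * x τ 1 * E
          + (Delk M a (x τ 1) - a ^ 2 * sin (x τ 2) ^ 2) / sin (x τ 2) ^ 2 * Φ)
        / (Sigk a (x τ 1) (x τ 2) * Delk M a (x τ 1)))
    (hvr : ∀ τ ∈ I, deriv (fun t => x t 1) τ =
      Real.sqrt (Rk M a E Φ κ (x τ 1)) / Sigk a (x τ 1) (x τ 2))
    (hvϑ : ∀ τ ∈ I, deriv (fun t => x t 2) τ =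
      Real.sqrt (Thk a E Φ κ (x τ 2)) / Sigk a (x τ 1) (x τ 2))
    (hgeo : ∀ τ ∈ I, ∀ i, deriv (deriv (fun t => x t i)) τ
      + ∑ j, ∑ k, kerrChristoffel M a i j k (x τ)
          * deriv (fun t => x t j) τ * deriv (fun t => x t k) τ = 0)
    (Φhat : ℝ → ℝ)
    (hΦhat : ∀ τ ∈ I, HasDerivAt Φhat
      (Real.sqrt κ / Sigk a (x τ 1) (x τ 2) *
        (Pk a E Φ (x τ 1) / (x τ 1 ^ 2 + κ)
          - a * Real.sin (x τ 2) * Dk a E Φ (x τ 2)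
            / (κ - a ^ 2 * Real.cos (x τ 2) ^ 2))) τ) :
    ∀ τ ∈ I,
      ParallelAt M a x (L0vec x) τ ∧
      ParallelAt M a x (L1vec M a E Φ κ x Φhat) τ ∧
      ParallelAt M a x (L2vec M a E Φ κ x Φhat) τ ∧
      ParallelAt M a x (L3vec M a E Φ κ x) τ := by
  exact marck_parallel_frame_general M a E Φ κ I hIopen x hx
    (fun τ hτ => Sigk_ne_zero_of_Rk_pos (hsin τ hτ).ne' (hR τ hτ) (hΘ τ hτ).le)
    (fun τ hτ => (hsin τ hτ).ne') hΔ (fun τ hτ => (hR τ hτ).le) (fun τ hτ => (hΘ τ hτ).le) hκ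
    hvt hvφ hvr hvϑ hgeo Φhat hΦhat
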